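/- Laplacian of the single-layer potential: Let ζ ∈ S², ρ ∈ (0,2), let e₁, e₂ be an orthonormal pair perpendicular to ζ, set c(θ) = (1−ρ)ζ + √(ρ(2−ρ))·(cos θ · e₁ + sin θ · e₂), and let Q : S² → ℝ be continuous. Define the single-layer potential u(x) = √(ρ(2−ρ))·∫₀^{2π} G((x/‖x‖)·c(θ))·Q(c(θ)) dθ for x in the open set D = {x ∈ ℝ³ : x ≠ 0 and ζ·(x/‖x‖) ≠ 1−ρ}. Then u is twice continuously differentiable on D and its Euclidean Laplacian satisfies Δu(x) = −(√(ρ(2−ρ))/(4π‖x‖²))·∫₀^{2π} Q(c(θ)) dθ for all x ∈ D. In particular, the single-layer potential is harmonic with respect to the Beltrami operator away from the boundary circle if and only if the density has vanishing mean, ∫₀^{2π} Q(c(θ)) dθ = 0. -/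

import Mathlib

/-!
The kernel of the potential is `fundSol ⟪x / ‖x‖, c⟫`, which up to an additive constant equals
`(log (‖x‖ - ⟪x, c⟫) - log ‖x‖) / 4π`. For a unit vector `c`, the function `w = ‖x‖ - ⟪x, c⟫`
satisfies `Δw = 2 / ‖x‖` and `|∇w|² = 2 w / ‖x‖`, so `log w` is harmonic where `w ≠ 0`, while
`Δ log ‖x‖ = ‖x‖⁻²` in dimension three. Hence the kernel has Laplacian `-1 / (4π ‖x‖²)`,
independently of `c` (`lap_fundSol`).

On `D` the point `x / ‖x‖` avoids the circle, so the kernel is jointly `C²` in `(x, θ)` and one may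
differentiate twice under the integral sign (`contDiffOn_integral`, `lap_integral`); the density
need only be continuous. The harmonicity criterion follows by evaluating the formula at the centre
`ζ` of the cap, which lies in `D`.
-/

open MeasureTheory Real intervalIntegral
open scoped RealInnerProductSpace

noncomputable section

/-- ℝ³ as Euclidean space. -/
abbrev E3 : Type := EuclideanSpace ℝ (Fin 3)

/-- The fundamental solution for the Beltrami operator. -/
def fundSol (t : ℝ) : ℝ := (1 / (4 * π)) * Real.log (1 - t) + (1 / (4 * π)) * (1 - Real.log 2)

/-- The coordinate Laplacian of a function u : ℝ³ → ℝ. -/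
def lap (u : E3 → ℝ) (x : E3) : ℝ :=
  ∑ i : Fin 3, fderiv ℝ (fun y => fderiv ℝ u y (EuclideanSpace.single i 1)) x
    (EuclideanSpace.single i 1)

/-! ### Parameter integrals -/

/-- The partial derivative in the first variable of a `C¹` function of two variables. -/
lemma hasFDerivAt_comp_inl {F : Type} [NormedAddCommGroup F] [NormedSpace ℝ F]
    {U : Set E3} (hU : IsOpen U) {k : E3 × ℝ → F} (hk : ContDiffOn ℝ 1 k (U ×ˢ Set.univ))
    {x : E3} (hx : x ∈ U) (θ : ℝ) :
    HasFDerivAt (fun y => k (y, θ))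
      ((fderiv ℝ k (x, θ)).comp (ContinuousLinearMap.inl ℝ E3 ℝ)) x := by
  have h1 : DifferentiableAt ℝ k (x, θ) :=
    (hk.contDiffAt ((hU.prod isOpen_univ).mem_nhds ⟨hx, trivial⟩)).differentiableAt one_ne_zero
  have h2 := h1.hasFDerivAt.comp x (hasFDerivAt_prodMk_left (𝕜 := ℝ) x θ)
  exact h2

lemma continuous_slice {F : Type} [NormedAddCommGroup F] [NormedSpace ℝ F]
    {U : Set E3} {k : E3 × ℝ → F} (hk : ContinuousOn k (U ×ˢ Set.univ))
    {x : E3} (hx : x ∈ U) : Continuous fun θ : ℝ => k (x, θ) :=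
  hk.comp_continuous (by fun_prop) fun θ => ⟨hx, trivial⟩

lemma continuousOn_fderiv_comp_inl {F : Type} [NormedAddCommGroup F] [NormedSpace ℝ F]
    {U : Set E3} (hU : IsOpen U) {k : E3 × ℝ → F} (hk : ContDiffOn ℝ 1 k (U ×ˢ Set.univ)) :
    ContinuousOn (fun p => (fderiv ℝ k p).comp (ContinuousLinearMap.inl ℝ E3 ℝ))
      (U ×ˢ Set.univ) :=
  (hk.continuousOn_fderiv_of_isOpen (hU.prod isOpen_univ) le_rfl).clm_comp continuousOn_const

/-- Differentiation under the integral sign; the domination comes from compactness of a closed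
ball around `x` times the interval of integration. -/
lemma hasFDerivAt_integral {F : Type} [NormedAddCommGroup F] [NormedSpace ℝ F]
    {U : Set E3} (hU : IsOpen U) {k : E3 × ℝ → F} (hk : ContDiffOn ℝ 1 k (U ×ˢ Set.univ))
    {q : ℝ → ℝ} (hq : Continuous q) {a b : ℝ} {x : E3} (hx : x ∈ U) :
    HasFDerivAt (fun y => ∫ θ in a..b, q θ • k (y, θ))
      (∫ θ in a..b, q θ • (fderiv ℝ k (x, θ)).comp (ContinuousLinearMap.inl ℝ E3 ℝ)) x := by
  obtain ⟨r, hr, hrU⟩ := Metric.nhds_basis_closedBall.mem_iff.1 (hU.mem_nhds hx)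
  have hc : ContinuousOn (fun p : E3 × ℝ => q p.2 •
      (fderiv ℝ k p).comp (ContinuousLinearMap.inl ℝ E3 ℝ)) (U ×ˢ Set.univ) :=
    (by fun_prop : Continuous fun p : E3 × ℝ => q p.2).continuousOn.smul
      (continuousOn_fderiv_comp_inl hU hk)
  obtain ⟨C, hC⟩ := ((isCompact_closedBall x r).prod (isCompact_uIcc (a := a) (b := b))
    ).exists_bound_of_continuousOn (hc.mono (Set.prod_mono hrU (Set.subset_univ _)))
  refine intervalIntegral.hasFDerivAt_integral_of_dominated_of_fderiv_le
    (F := fun y θ => q θ • k (y, θ))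
    (F' := fun y θ => q θ • (fderiv ℝ k (y, θ)).comp (ContinuousLinearMap.inl ℝ E3 ℝ))
    (bound := fun _ => C) (Metric.closedBall_mem_nhds x hr) ?_ ?_ ?_ ?_ ?_ ?_
  · filter_upwards [hU.mem_nhds hx] with y hy
    exact (hq.smul (continuous_slice hk.continuousOn hy)).aestronglyMeasurable
  · exact (hq.smul (continuous_slice hk.continuousOn hx)).intervalIntegrable _ _
  · exact (continuous_slice hc hx).aestronglyMeasurable
  · exact Filter.Eventually.of_forall fun θ hθ y hy =>
      hC (y, θ) ⟨hy, Set.uIoc_subset_uIcc hθ⟩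
  · exact intervalIntegrable_const
  · exact Filter.Eventually.of_forall fun θ hθ y hy =>
      (hasFDerivAt_comp_inl hU hk (hrU hy) θ).const_smul (q θ)

/-- Differentiability of parameter integrals. The target `F` is quantified inside the induction
on `n`, since the derivative of `k` takes values in `E3 →L[ℝ] F`. -/
lemma contDiffOn_integral {U : Set E3} (hU : IsOpen U) {q : ℝ → ℝ} (hq : Continuous q) (a b : ℝ)
    (n : ℕ) : ∀ {F : Type} [NormedAddCommGroup F] [NormedSpace ℝ F] {k : E3 × ℝ → F},
    ContDiffOn ℝ n k (U ×ˢ Set.univ) →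
    ContDiffOn ℝ n (fun y => ∫ θ in a..b, q θ • k (y, θ)) U := by
  induction n with
  | zero =>
    intro F _ _ k hk
    simp only [Nat.cast_zero, contDiffOn_zero] at hk ⊢
    rw [continuousOn_iff_continuous_domRestrict]
    refine intervalIntegral.continuous_parametric_intervalIntegral_of_continuous'
      (f := fun (y : U) θ => q θ • k (y, θ)) ?_ a b
    refine Continuous.smul (by fun_prop) ?_
    exact hk.comp_continuous (by fun_prop) fun p => ⟨p.1.2, trivial⟩
  | succ n ih =>
    intro F _ _ k hk
    have hk1 : ContDiffOn ℝ 1 k (U ×ˢ Set.univ) := hk.of_le (by simp)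
    have hd := fun x hx => hasFDerivAt_integral hU hk1 hq (a := a) (b := b) (x := x) hx
    have hk' := ((contDiffOn_succ_iff_fderiv_of_isOpen (n := n)
      (hU.prod isOpen_univ)).1 (by exact_mod_cast hk)).2.2
    push_cast
    refine (contDiffOn_succ_iff_fderiv_of_isOpen hU).2
      ⟨fun x hx => (hd x hx).differentiableAt.differentiableWithinAt, by simp, ?_⟩
    exact (ih (k := fun p => (fderiv ℝ k p).comp (ContinuousLinearMap.inl ℝ E3 ℝ))
      (hk'.clm_comp contDiffOn_const)).congr fun x hx => (hd x hx).fderiv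

/-- The Laplacian passes under the integral sign. -/
lemma lap_integral {U : Set E3} (hU : IsOpen U) {k : E3 × ℝ → ℝ}
    (hk : ContDiffOn ℝ 2 k (U ×ˢ Set.univ)) {q : ℝ → ℝ} (hq : Continuous q) {a b : ℝ}
    {x : E3} (hx : x ∈ U) :
    lap (fun y => ∫ θ in a..b, q θ • k (y, θ)) x =
      ∫ θ in a..b, q θ • lap (fun y => k (y, θ)) x := by
  have hk1 : ContDiffOn ℝ 1 k (U ×ˢ Set.univ) := hk.of_le (by norm_num)
  set ki : Fin 3 → E3 × ℝ → ℝ := fun i p =>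
    fderiv ℝ k p (ContinuousLinearMap.inl ℝ E3 ℝ (EuclideanSpace.single i 1)) with hki
  have hkiC : ∀ i, ContDiffOn ℝ 1 (ki i) (U ×ˢ Set.univ) := fun i =>
    (hk.fderiv_of_isOpen (hU.prod isOpen_univ) (m := 1) (by norm_num)).clm_apply
      contDiffOn_const
  have e1 : ∀ i, ∀ y ∈ U, fderiv ℝ (fun y => ∫ θ in a..b, q θ • k (y, θ)) y
      (EuclideanSpace.single i 1) = ∫ θ in a..b, q θ • ki i (y, θ) := by
    intro i y hy
    rw [(hasFDerivAt_integral hU hk1 hq hy).fderiv, ContinuousLinearMap.intervalIntegral_apply]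
    · rfl
    · exact (hq.smul (continuous_slice
        (continuousOn_fderiv_comp_inl hU hk1) hy)).intervalIntegrable _ _
  have e2 : ∀ i, fderiv ℝ (fun y => fderiv ℝ (fun y => ∫ θ in a..b, q θ • k (y, θ)) y
      (EuclideanSpace.single i 1)) x (EuclideanSpace.single i 1) =
      ∫ θ in a..b, q θ • (fderiv ℝ (ki i) (x, θ)).comp (ContinuousLinearMap.inl ℝ E3 ℝ)
        (EuclideanSpace.single i 1) := by
    intro i
    have : (fun y => fderiv ℝ (fun y => ∫ θ in a..b, q θ • k (y, θ)) y
      (EuclideanSpace.single i 1)) =ᶠ[nhds x] fun y => ∫ θ in a..b, q θ • ki i (y, θ) := by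
      filter_upwards [hU.mem_nhds hx] with y hy using e1 i y hy
    rw [this.fderiv_eq, (hasFDerivAt_integral hU (hkiC i) hq hx).fderiv,
      ContinuousLinearMap.intervalIntegral_apply]
    · rfl
    · exact (hq.smul (continuous_slice
        (continuousOn_fderiv_comp_inl hU (hkiC i)) hx)).intervalIntegrable _ _
  have e3 : ∀ i θ, (fderiv ℝ (ki i) (x, θ)).comp (ContinuousLinearMap.inl ℝ E3 ℝ)
        (EuclideanSpace.single i 1) =
      fderiv ℝ (fun y => fderiv ℝ (fun z => k (z, θ)) y (EuclideanSpace.single i 1)) x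
        (EuclideanSpace.single i 1) := by
    intro i θ
    have : (fun y => fderiv ℝ (fun z => k (z, θ)) y (EuclideanSpace.single i 1)) =ᶠ[nhds x]
        fun y => ki i (y, θ) := by
      filter_upwards [hU.mem_nhds hx] with y hy
      rw [(hasFDerivAt_comp_inl hU hk1 hy θ).fderiv]
      rfl
    rw [this.fderiv_eq, (hasFDerivAt_comp_inl hU (hkiC i) hx θ).fderiv]
  unfold lap
  simp_rw [e2, ← e3, Finset.smul_sum]
  rw [intervalIntegral.integral_finsetSum]
  intro i _
  exact (hq.smul ((continuous_slice (continuousOn_fderiv_comp_inl hU (hkiC i)) hx).clm_apply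
    continuous_const)).intervalIntegrable _ _

/-! ### The Laplacian of the kernel -/

/-- The potential of a unit point charge: in terms of `w y = ‖y‖ - ⟪y, c⟫`, the kernel is
`(log w - log ‖y‖) / 4π` up to a constant, where `log w` is harmonic and `log ‖y‖` has
Laplacian `‖y‖⁻²`. -/
lemma lap_fundSol {c : E3} (hc : ‖c‖ = 1) {x : E3} (hx : x ≠ 0) (hw : ‖x‖ - ⟪x, c⟫ ≠ 0) :
    lap (fun y => fundSol ⟪‖y‖⁻¹ • y, c⟫) x = -1 / (4 * π * ‖x‖ ^ 2) := by
  have hnorm : ∀ y : E3, y ≠ 0 → HasFDerivAt (fun z : E3 => ‖z‖) (‖y‖⁻¹ • innerSL ℝ y) y := by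
    intro y hy
    have h := (hasFDerivAt_id (𝕜 := ℝ) y).norm_sq.sqrt (by simpa using hy)
    simp only [id, Real.sqrt_sq (norm_nonneg _)] at h
    convert! h using 1
    ext v
    simp
    field_simp
  have hlin : ∀ v y : E3, HasFDerivAt (fun z : E3 => ⟪z, v⟫) (innerSL ℝ v) y := by
    intro v y
    have := (innerSL ℝ v).hasFDerivAt (x := y)
    simpa [real_inner_comm] using this
  set S : Set E3 := {y | y ≠ 0 ∧ ‖y‖ - ⟪y, c⟫ ≠ 0} with hS
  have hSo : IsOpen S := (isOpen_ne_fun continuous_id continuous_const).inter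
    (isOpen_ne_fun (by fun_prop) continuous_const)
  have hxS : S ∈ nhds x := hSo.mem_nhds ⟨hx, hw⟩
  have hform : ∀ y ∈ S, fundSol ⟪‖y‖⁻¹ • y, c⟫ = (1 / (4 * π)) *
      (Real.log (‖y‖ - ⟪y, c⟫) - Real.log ‖y‖) + (1 / (4 * π)) * (1 - Real.log 2) := by
    intro y hy
    have hy0 : ‖y‖ ≠ 0 := norm_ne_zero_iff.2 hy.1
    unfold fundSol
    rw [← Real.log_div hy.2 hy0, real_inner_smul_left]
    congr 3
    field_simp
  have hd : ∀ y ∈ S, ∀ v, fderiv ℝ (fun y => fundSol ⟪‖y‖⁻¹ • y, c⟫) y v = (1 / (4 * π)) *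
      ((‖y‖ * (‖y‖ - ⟪y, c⟫))⁻¹ * (⟪y, v⟫ - ‖y‖ * ⟪c, v⟫) - (‖y‖ ^ 2)⁻¹ * ⟪y, v⟫) := by
    intro y hy v
    have hy0 : ‖y‖ ≠ 0 := norm_ne_zero_iff.2 hy.1
    have he : (fun y => fundSol ⟪‖y‖⁻¹ • y, c⟫) =ᶠ[nhds y] fun y => (1 / (4 * π)) *
      (Real.log (‖y‖ - ⟪y, c⟫) - Real.log ‖y‖) + (1 / (4 * π)) * (1 - Real.log 2) := by
      filter_upwards [hSo.mem_nhds hy] with z hz using hform z hz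
    have := (((((hnorm y hy.1).sub (hlin c y)).log hy.2).sub
      ((hnorm y hy.1).log hy0)).const_mul (1 / (4 * π))).add_const
        ((1 / (4 * π)) * (1 - Real.log 2))
    have hy2 := hy.2
    rw [he.fderiv_eq]
    refine (congrArg (· v) this.fderiv).trans ?_
    simp
    field_simp
  -- The second derivative along a unit vector `v`, as a quadratic form in `⟪x, v⟫`, `⟪c, v⟫`.
  have hd2 : ∀ v, ‖v‖ = 1 → fderiv ℝ (fun y => fderiv ℝ (fun y => fundSol ⟪‖y‖⁻¹ • y, c⟫) y v) x v =
      (1 / (4 * π)) * (((‖x‖ * (‖x‖ - ⟪x, c⟫))⁻¹ - (‖x‖ ^ 2)⁻¹)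
        + (2 / ‖x‖ ^ 4 - ((‖x‖ * (‖x‖ - ⟪x, c⟫)) ^ 2)⁻¹
            - (‖x‖ ^ 3 * (‖x‖ - ⟪x, c⟫))⁻¹) * ⟪x, v⟫ ^ 2
        + 2 / (‖x‖ * (‖x‖ - ⟪x, c⟫) ^ 2) * (⟪x, v⟫ * ⟪c, v⟫)
        - ((‖x‖ - ⟪x, c⟫) ^ 2)⁻¹ * ⟪c, v⟫ ^ 2) := by
    intro v hv
    have he : (fun y => fderiv ℝ (fun y => fundSol ⟪‖y‖⁻¹ • y, c⟫) y v) =ᶠ[nhds x] fun y =>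
      (1 / (4 * π)) *
      ((‖y‖ * (‖y‖ - ⟪y, c⟫))⁻¹ * (⟪y, v⟫ - ‖y‖ * ⟪c, v⟫) - (‖y‖ ^ 2)⁻¹ * ⟪y, v⟫) := by
      filter_upwards [hxS] with z hz using hd z hz v
    have hx0 : ‖x‖ ≠ 0 := norm_ne_zero_iff.2 hx
    have hN := hnorm x hx
    have := ((((hasFDerivAt_inv (mul_ne_zero hx0 hw)).comp x (hN.mul (hN.sub (hlin c x)))).mul
      ((hlin v x).sub (hN.mul_const ⟪c, v⟫))).sub
      (((hasFDerivAt_inv (pow_ne_zero 2 hx0)).comp x (hN.pow 2)).mul (hlin v x))).const_mul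
      (1 / (4 * π))
    rw [he.fderiv_eq]
    refine (congrArg (· v) this.fderiv).trans ?_
    simp [hv]
    field_simp
    ring
  have hx0 : ‖x‖ ≠ 0 := norm_ne_zero_iff.2 hx
  have hxx : x 0 ^ 2 + x 1 ^ 2 + x 2 ^ 2 = ‖x‖ ^ 2 := by
    simp [EuclideanSpace.real_norm_sq_eq, Fin.sum_univ_three]
  have hcc : c 0 ^ 2 + c 1 ^ 2 + c 2 ^ 2 = 1 := by
    have : ‖c‖ ^ 2 = 1 := by rw [hc, one_pow]
    simpa [EuclideanSpace.real_norm_sq_eq, Fin.sum_univ_three] using this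
  have hxc : x 0 * c 0 + x 1 * c 1 + x 2 * c 2 = ⟪x, c⟫ := by
    simp [PiLp.inner_apply, Fin.sum_univ_three, mul_comm]
  unfold lap
  rw [Fin.sum_univ_three, hd2 _ (by simp), hd2 _ (by simp), hd2 _ (by simp)]
  simp only [EuclideanSpace.inner_single_right, conj_trivial, one_mul]
  generalize ⟪x, c⟫ = s at *
  obtain ⟨w, rfl⟩ : ∃ w, s = ‖x‖ - w := ⟨‖x‖ - s, by ring⟩
  simp only [sub_sub_cancel] at *
  calc _ = (1 / (4 * π)) * (3 * ((‖x‖ * w)⁻¹ - (‖x‖ ^ 2)⁻¹)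
        + (2 / ‖x‖ ^ 4 - ((‖x‖ * w) ^ 2)⁻¹ - (‖x‖ ^ 3 * w)⁻¹) * (x 0 ^ 2 + x 1 ^ 2 + x 2 ^ 2)
        + 2 / (‖x‖ * w ^ 2) * (x 0 * c 0 + x 1 * c 1 + x 2 * c 2)
        - (w ^ 2)⁻¹ * (c 0 ^ 2 + c 1 ^ 2 + c 2 ^ 2)) := by ring
    _ = _ := by
      rw [hxx, hxc, hcc]
      field_simp
      ring

/-! ### The single-layer potential -/

/-- Laplacian of the single-layer potential. -/
theorem single_layer_laplacian (ζ : E3) (hζ : ζ ∈ Metric.sphere (0 : E3) 1)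
    (ρ : ℝ) (hρ0 : 0 < ρ) (hρ2 : ρ < 2)
    (e₁ e₂ : E3) (he₁ : ‖e₁‖ = 1) (he₂ : ‖e₂‖ = 1) (he₁e₂ : ⟪e₁, e₂⟫ = 0)
    (hζe₁ : ⟪ζ, e₁⟫ = 0) (hζe₂ : ⟪ζ, e₂⟫ = 0)
    (c : ℝ → E3)
    (hc : ∀ θ : ℝ, c θ = (1 - ρ) • ζ + Real.sqrt (ρ * (2 - ρ)) •
      (Real.cos θ • e₁ + Real.sin θ • e₂))
    (Q : E3 → ℝ) (hQ : ContinuousOn Q (Metric.sphere (0 : E3) 1))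
    (D : Set E3) (hD : D = {x : E3 | x ≠ 0 ∧ ⟪ζ, ‖x‖⁻¹ • x⟫ ≠ 1 - ρ})
    (u : E3 → ℝ)
    (hu : ∀ x ∈ D,
      u x = Real.sqrt (ρ * (2 - ρ)) *
        ∫ θ in (0:ℝ)..(2 * π), fundSol ⟪‖x‖⁻¹ • x, c θ⟫ * Q (c θ)) :
    ContDiffOn ℝ 2 u D ∧
    (∀ x ∈ D, lap u x = -(Real.sqrt (ρ * (2 - ρ)) / (4 * π * ‖x‖ ^ 2)) *
      ∫ θ in (0:ℝ)..(2 * π), Q (c θ)) ∧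
    ((∀ x ∈ D, lap u x = 0) ↔ (∫ θ in (0:ℝ)..(2 * π), Q (c θ)) = 0) := by
  subst hD
  have hζ1 : ‖ζ‖ = 1 := by simpa using hζ
  have hs2 : Real.sqrt (ρ * (2 - ρ)) ^ 2 = ρ * (2 - ρ) :=
    Real.sq_sqrt (mul_nonneg hρ0.le (by linarith))
  have hspos : 0 < Real.sqrt (ρ * (2 - ρ)) := Real.sqrt_pos.2 (mul_pos hρ0 (by linarith))
  set s := Real.sqrt (ρ * (2 - ρ)) with hs
  have hζζ : ⟪ζ, ζ⟫ = (1 : ℝ) := by rw [real_inner_self_eq_norm_sq, hζ1, one_pow]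
  have hcζ : ∀ θ, ⟪ζ, c θ⟫ = 1 - ρ := by
    intro θ
    simp [hc, inner_add_right, inner_smul_right, hζe₁, hζe₂, hζ1]
  have hc1 : ∀ θ, ‖c θ‖ = 1 := by
    intro θ
    have he₂e₁ : ⟪e₂, e₁⟫ = (0 : ℝ) := by rw [real_inner_comm, he₁e₂]
    have he₁ζ : ⟪e₁, ζ⟫ = (0 : ℝ) := by rw [real_inner_comm, hζe₁]
    have he₂ζ : ⟪e₂, ζ⟫ = (0 : ℝ) := by rw [real_inner_comm, hζe₂]
    have h : ‖c θ‖ ^ 2 = 1 := by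
      rw [← real_inner_self_eq_norm_sq, hc]
      simp only [inner_add_right, inner_add_left, inner_smul_right, real_inner_smul_left, hζe₁,
        hζe₂, he₁ζ, he₂ζ, he₂e₁, he₁e₂, real_inner_self_eq_norm_sq, he₁, he₂, hζ1]
      linear_combination s ^ 2 * Real.sin_sq_add_cos_sq θ + hs2
    exact (pow_eq_one_iff_of_nonneg (norm_nonneg _) two_ne_zero).1 h
  have hcC : ContDiff ℝ 2 c := by
    rw [funext hc]
    fun_prop
  have hq : Continuous fun θ => Q (c θ) :=
    hQ.comp_continuous hcC.continuous fun θ => by simp [hc1 θ]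
  set D : Set E3 := {x : E3 | x ≠ 0 ∧ ⟪ζ, ‖x‖⁻¹ • x⟫ ≠ 1 - ρ} with hD
  have hDo : IsOpen D := by
    have : D = {x : E3 | x ≠ 0} ∩ {x : E3 | ⟪ζ, x⟫ ≠ (1 - ρ) * ‖x‖} := by
      ext x
      simp only [hD, Set.mem_ofPred_eq, Set.mem_inter_iff, inner_smul_right]
      refine and_congr_right fun hx => not_congr ?_
      rw [inv_mul_eq_iff_eq_mul₀ (norm_ne_zero_iff.2 hx), mul_comm]
    rw [this]
    exact (isOpen_ne_fun continuous_id continuous_const).inter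
      (isOpen_ne_fun (by fun_prop) (by fun_prop))
  -- Equality in Cauchy-Schwarz would put `x / ‖x‖` on the boundary circle.
  have hne : ∀ x ∈ D, ∀ θ, ⟪‖x‖⁻¹ • x, c θ⟫ ≠ (1 : ℝ) := by
    intro x hx θ h
    have h1 : ‖‖x‖⁻¹ • x‖ = 1 := norm_smul_inv_norm hx.1
    rw [inner_eq_one_iff_of_norm_eq_one h1 (hc1 θ)] at h
    exact hx.2 (by rw [h, hcζ])
  have hk : ContDiffOn ℝ 2 (fun p : E3 × ℝ => fundSol ⟪‖p.1‖⁻¹ • p.1, c p.2⟫)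
      (D ×ˢ Set.univ) := by
    rintro ⟨x, θ⟩ ⟨hx, -⟩
    apply ContDiffAt.contDiffWithinAt
    have hn : ContDiffAt ℝ 2 (fun p : E3 × ℝ => ‖p.1‖⁻¹ • p.1) (x, θ) :=
      ((contDiffAt_fst.norm ℝ hx.1).inv (norm_ne_zero_iff.2 hx.1)).smul contDiffAt_fst
    have hi : ContDiffAt ℝ 2 (fun p : E3 × ℝ => ⟪‖p.1‖⁻¹ • p.1, c p.2⟫) (x, θ) :=
      hn.inner ℝ (hcC.comp contDiff_snd).contDiffAt
    exact (contDiffAt_const.mul ((contDiffAt_const.sub hi).log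
      (sub_ne_zero.2 (hne x hx θ).symm))).add contDiffAt_const
  set V : E3 → ℝ := fun y => ∫ θ in (0:ℝ)..(2 * π), (s * Q (c θ)) •
    fundSol ⟪‖y‖⁻¹ • y, c θ⟫ with hV
  have hsq : Continuous fun θ => s * Q (c θ) := continuous_const.mul hq
  have huV : ∀ x ∈ D, u x = V x := by
    intro x hx
    rw [hu x hx, hV, ← intervalIntegral.integral_const_mul]
    refine intervalIntegral.integral_congr fun θ _ => ?_
    simp only [smul_eq_mul]
    ring
  have hlap : ∀ x ∈ D, lap u x = -(s / (4 * π * ‖x‖ ^ 2)) *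
      ∫ θ in (0:ℝ)..(2 * π), Q (c θ) := by
    intro x hx
    have he : u =ᶠ[nhds x] V := by
      filter_upwards [hDo.mem_nhds hx] with y hy using huV y hy
    have hl : lap u x = lap V x := by
      refine Finset.sum_congr rfl fun i _ => ?_
      have : (fun y => fderiv ℝ u y (EuclideanSpace.single i 1)) =ᶠ[nhds x]
          fun y => fderiv ℝ V y (EuclideanSpace.single i 1) := by
        filter_upwards [he.fderiv (𝕜 := ℝ)] with y hy
        rw [hy]
      rw [this.fderiv_eq]
    rw [hl, hV, lap_integral hDo hk hsq hx, ← intervalIntegral.integral_const_mul]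
    refine intervalIntegral.integral_congr fun θ _ => ?_
    have hx0 : ‖x‖ ≠ 0 := norm_ne_zero_iff.2 hx.1
    have hw : ‖x‖ - ⟪x, c θ⟫ ≠ 0 := by
      have := hne x hx θ
      rw [real_inner_smul_left, ne_eq, inv_mul_eq_one₀ hx0] at this
      exact sub_ne_zero.2 this
    simp only [smul_eq_mul]
    rw [lap_fundSol (hc1 θ) hx.1 hw]
    ring
  have hVC : ContDiffOn ℝ 2 V D := contDiffOn_integral hDo hsq 0 (2 * π) 2 hk
  refine ⟨hVC.congr huV, hlap, fun h => ?_,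
    fun h x hx => by rw [hlap x hx, h, mul_zero]⟩
  -- `D` is nonempty: it contains the centre of the cap.
  have hζD : ζ ∈ D := by
    refine ⟨fun h0 => by simp [h0] at hζ1, ?_⟩
    rw [hζ1, inv_one, one_smul, hζζ]
    intro h1
    linarith
  have h0 := h ζ hζD
  rw [hlap ζ hζD, hζ1] at h0
  refine (mul_eq_zero.1 h0).resolve_left (neg_ne_zero.2 (div_pos hspos ?_).ne')
  positivity


end
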